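/- arXiv:2001.00805 — 6 statements merged into one kernel-verified Lean document; each statement's English description precedes it below -/
import Mathlib

section
/- Let Ω be a nonempty finite type with a probability mass function μ, A a nonempty finite type, Q : A → Ω → ℝ, and O : Ω → A an optimal-action selector (Q (O ω) ω = max_{a} Q a ω for every ω). Let β > 0 and let K : A → ℝ satisfy exp(β·K a) ≥ Σ_ω μ(ω)·exp(β·Q a ω) for every a ∈ A (the K-values upper-bound the cumulant generating functions of the posterior optimal Q-values). Then β⁻¹·log(Σ_a exp(β·K a)) ≥ Σ_ω μ(ω)·(max_a Q a ω) + β⁻¹·KL(p_O ‖ π_{βK}), i.e. the K-learning value function exceeds the expected optimal value by at least β⁻¹ times the KL divergence from the true probability of optimality to the K-learning Boltzmann policy. (Theorem 1, finite single-state form.) -/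
open Finset Real Classical

noncomputable section

/-!
On the event that action `a` is selected, Jensen's inequality for `exp` bounds the accumulated value
by `p a * k a - p a * log (p a)`, where `p a` is the probability of the event and `k a` bounds the
cumulant generating function of the value of `a`. Summed over `a`, this says that the expected value
of the selected action is at most the expectation of `k` under `p` plus the entropy of `p`. By the
Gibbs variational identity, that sum equals `log ∑ a, exp (k a)` minus the divergence of `p` from
the Boltzmann policy of `k`.
-/

theorem sum_mul_le_mul_add_negMulLog_of_sum_mul_exp_le {ι : Type*} {s : Finset ι} {w f : ι → ℝ}
    {k : ℝ} (hw : ∀ i ∈ s, 0 ≤ w i) (hexp : ∑ i ∈ s, w i * exp (f i) ≤ exp k) :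
    ∑ i ∈ s, w i * f i ≤ (∑ i ∈ s, w i) * k + negMulLog (∑ i ∈ s, w i) := by
  rcases (sum_nonneg hw).eq_or_lt' with hzero | hpos
  · have hw_zero : ∀ i ∈ s, w i = 0 := (sum_eq_zero_iff_of_nonneg hw).1 hzero
    have hsum : ∑ i ∈ s, w i * f i = 0 :=
      sum_eq_zero fun i hi ↦ by rw [hw_zero i hi, zero_mul]
    simp [hzero, hsum]
  · set W := ∑ i ∈ s, w i
    have hjensen : exp (W⁻¹ * ∑ i ∈ s, w i * f i) ≤ W⁻¹ * ∑ i ∈ s, w i * exp (f i) :=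
      convexOn_exp.map_centerMass_le hw hpos fun _ _ ↦ Set.mem_univ _
    have hmean : W⁻¹ * ∑ i ∈ s, w i * f i ≤ k - log W := by
      rw [← exp_le_exp, exp_sub, exp_log hpos, div_eq_inv_mul]
      exact hjensen.trans (by gcongr)
    calc ∑ i ∈ s, w i * f i ≤ W * (k - log W) := (inv_mul_le_iff₀ hpos).1 hmean
      _ = W * k + negMulLog W := by rw [negMulLog]; ring

section

variable {Ω A : Type*} [Fintype Ω]

/-- The probability of optimality `p_O` when `O` selects optimal actions; the definition makes sense
for any selector `O` and any weights `μ`. -/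
def selectionProb (μ : Ω → ℝ) (O : Ω → A) (a : A) : ℝ :=
  ∑ ω with O ω = a, μ ω

theorem selectionProb_nonneg {μ : Ω → ℝ} (hμ : ∀ ω, 0 ≤ μ ω) (O : Ω → A) (a : A) :
    0 ≤ selectionProb μ O a :=
  sum_nonneg fun ω _ ↦ hμ ω

variable [Fintype A]

theorem sum_selectionProb (μ : Ω → ℝ) (O : Ω → A) : ∑ a, selectionProb μ O a = ∑ ω, μ ω :=
  sum_fiberwise univ O μ

theorem sum_mul_selected_le_sum_add_negMulLog {μ : Ω → ℝ} (hμ : ∀ ω, 0 ≤ μ ω)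
    (O : Ω → A) {f : A → Ω → ℝ} {k : A → ℝ}
    (hk : ∀ a, ∑ ω, μ ω * exp (f a ω) ≤ exp (k a)) :
    ∑ ω, μ ω * f (O ω) ω ≤
      ∑ a, (selectionProb μ O a * k a + negMulLog (selectionProb μ O a)) := by
  have hfiber (a : A) : ∑ ω with O ω = a, μ ω * exp (f a ω) ≤ exp (k a) :=
    (sum_le_univ_sum_of_nonneg fun ω ↦ mul_nonneg (hμ ω) (exp_nonneg _)).trans (hk a)
  calc ∑ ω, μ ω * f (O ω) ω = ∑ a, ∑ ω with O ω = a, μ ω * f (O ω) ω :=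
        (sum_fiberwise univ O _).symm
    _ = ∑ a, ∑ ω with O ω = a, μ ω * f a ω :=
        sum_congr rfl fun a _ ↦ sum_congr rfl fun ω hω ↦ by rw [(mem_filter.1 hω).2]
    _ ≤ _ := sum_le_sum fun a _ ↦
        sum_mul_le_mul_add_negMulLog_of_sum_mul_exp_le (fun ω _ ↦ hμ ω) (hfiber a)

/-- The Boltzmann policy of the action values `k`; the policy `π_{βK}` is
`softmax fun a ↦ β * K a`. -/
def softmax (k : A → ℝ) (a : A) : ℝ :=
  exp (k a) / ∑ b, exp (k b)

/-- The Kullback–Leibler divergence `KL(p‖q)` of real-valued weights on a finite type, meaningful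
when `q a ≠ 0` wherever `0 < p a`. -/
def discreteKL (p q : A → ℝ) : ℝ :=
  ∑ a with 0 < p a, p a * log (p a / q a)

theorem mul_log_div_softmax (k : A → ℝ) (a : A) (p : ℝ) :
    p * log (p / softmax k a) = p * log (∑ b, exp (k b)) - (p * k a + negMulLog p) := by
  rcases eq_or_ne p 0 with rfl | hp
  · simp
  have hZ : 0 < ∑ b, exp (k b) := sum_pos (fun b _ ↦ exp_pos _) ⟨a, mem_univ a⟩
  rw [softmax, log_div hp (div_pos (exp_pos _) hZ).ne', log_div (exp_ne_zero _) hZ.ne', log_exp,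
    negMulLog]
  ring

theorem discreteKL_eq_sum {p : A → ℝ} (hp : ∀ a, 0 ≤ p a) (q : A → ℝ) :
    discreteKL p q = ∑ a, p a * log (p a / q a) :=
  sum_filter_of_ne fun a _ hne ↦ (hp a).lt_of_ne' (left_ne_zero_of_mul hne)

theorem discreteKL_softmax {p : A → ℝ} (hp : ∀ a, 0 ≤ p a) (k : A → ℝ) :
    discreteKL p (softmax k) =
      (∑ a, p a) * log (∑ a, exp (k a)) - ∑ a, (p a * k a + negMulLog (p a)) := by
  simp_rw [discreteKL_eq_sum hp, mul_log_div_softmax, sum_sub_distrib, sum_mul]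

theorem klearning_value_kl_bound_general {μ : Ω → ℝ} (hμ : ∀ ω, 0 ≤ μ ω)
    (Q : A → Ω → ℝ) (O : Ω → A) {β : ℝ} (hβ : 0 < β) {K : A → ℝ}
    (hK : ∀ a, ∑ ω, μ ω * exp (β * Q a ω) ≤ exp (β * K a)) :
    ∑ ω, μ ω * Q (O ω) ω + β⁻¹ * discreteKL (selectionProb μ O) (softmax fun a ↦ β * K a) ≤
      (∑ ω, μ ω) * (β⁻¹ * log (∑ a, exp (β * K a))) := by
  have hvalue := sum_mul_selected_le_sum_add_negMulLog hμ O hK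
  have hgibbs := discreteKL_softmax (selectionProb_nonneg hμ O) fun a ↦ β * K a
  rw [sum_selectionProb] at hgibbs
  calc ∑ ω, μ ω * Q (O ω) ω + β⁻¹ * discreteKL (selectionProb μ O) (softmax fun a ↦ β * K a)
      = β⁻¹ * (∑ ω, μ ω * (β * Q (O ω) ω) +
          discreteKL (selectionProb μ O) (softmax fun a ↦ β * K a)) := by
        simp_rw [mul_left_comm _ β, ← mul_sum]
        rw [mul_add, inv_mul_cancel_left₀ hβ.ne']
    _ ≤ β⁻¹ * ((∑ ω, μ ω) * log (∑ a, exp (β * K a))) := by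
        gcongr
        linarith
    _ = (∑ ω, μ ω) * (β⁻¹ * log (∑ a, exp (β * K a))) := mul_left_comm _ _ _

end

/-- **Theorem 1 (finite single-state form).** The K-learning value function
`β⁻¹ log Σₐ exp(β Kₐ)` exceeds the expected optimal value by at least `β⁻¹`
times the KL divergence from the true probability of optimality to the
K-learning Boltzmann policy. -/
theorem klearning_value_kl_bound
    {Ω A : Type*} [Fintype Ω] [Nonempty Ω] [Fintype A] [Nonempty A]
    (μ : Ω → ℝ) (hμ0 : ∀ ω, 0 ≤ μ ω) (hμ1 : ∑ ω, μ ω = 1)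
    (Q : A → Ω → ℝ) (O : Ω → A)
    (hO : ∀ ω, Q (O ω) ω = Finset.univ.sup' Finset.univ_nonempty (fun a => Q a ω))
    (β : ℝ) (hβ : 0 < β) (K : A → ℝ)
    (hK : ∀ a, Real.exp (β * K a) ≥ ∑ ω, μ ω * Real.exp (β * Q a ω))
    (pO : A → ℝ)
    (hpO : ∀ a, pO a = ∑ ω ∈ Finset.univ.filter (fun ω => O ω = a), μ ω)
    (piK : A → ℝ)
    (hπ : ∀ a, piK a = Real.exp (β * K a) / ∑ b, Real.exp (β * K b))
    (KL : ℝ)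
    (hKL : KL = ∑ a ∈ Finset.univ.filter (fun a => 0 < pO a),
      pO a * Real.log (pO a / piK a)) :
    β⁻¹ * Real.log (∑ a, Real.exp (β * K a)) ≥
      (∑ ω, μ ω * Finset.univ.sup' Finset.univ_nonempty (fun a => Q a ω))
        + β⁻¹ * KL := by
  obtain rfl : pO = selectionProb μ O := funext hpO
  obtain rfl : piK = softmax fun a ↦ β * K a := funext hπ
  obtain rfl : KL = discreteKL (selectionProb μ O) (softmax fun a ↦ β * K a) := hKL
  simp_rw [← hO]
  simpa only [hμ1, one_mul] using klearning_value_kl_bound_general hμ0 Q O hβ hK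
end
end

section
/- Let Ω be a nonempty finite type with a probability mass function μ, A a nonempty finite type, Q : A → Ω → ℝ, β > 0, and K : A → ℝ with exp(β·K a) ≥ Σ_ω μ(ω)·exp(β·Q a ω) for every a ∈ A. Then β⁻¹·log(Σ_a exp(β·K a)) ≥ Σ_ω μ(ω)·(max_a Q a ω); that is, the K-learning value function is optimistic for the expected optimal value. -/
open Finset Real Classical

noncomputable section

/-!
By Jensen's inequality, the exponential of `β` times the expected maximum is at most the expectation
of the exponential of `β` times the maximum. The maximum over actions is attained, so its
exponential is one term of the sum over all actions and hence at most that sum. Exchanging the sums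
over environments and actions leaves the moment generating functions, which `K` dominates.
-/

section MaxLeSum

variable {ι κ α M : Type*} [LinearOrder α] [AddCommMonoid M] [PartialOrder M]
  [IsOrderedAddMonoid M] {s : Finset ι}

theorem apply_sup'_le_sum (hs : s.Nonempty) (f : ι → α) {g : α → M}
    (hg : ∀ i ∈ s, 0 ≤ g (f i)) :
    g (s.sup' hs f) ≤ ∑ i ∈ s, g (f i) := by
  obtain ⟨i, hi, hsup⟩ := s.exists_mem_eq_sup' hs f
  rw [hsup]
  exact single_le_sum hg hi

theorem sum_apply_sup'_le_sum_sum (t : Finset κ) (hs : s.Nonempty) (f : ι → κ → α)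
    {g : κ → α → M} (hg : ∀ k ∈ t, ∀ i ∈ s, 0 ≤ g k (f i k)) :
    ∑ k ∈ t, g k (s.sup' hs fun i => f i k) ≤ ∑ i ∈ s, ∑ k ∈ t, g k (f i k) := by
  rw [sum_comm]
  exact sum_le_sum fun k hk => apply_sup'_le_sum hs (fun i => f i k) (hg k hk)

end MaxLeSum

theorem exp_mul_sum_mul_le_sum_mul_exp {κ : Type*} {t : Finset κ} {w : κ → ℝ}
    (hw0 : ∀ k ∈ t, 0 ≤ w k) (hw1 : ∑ k ∈ t, w k = 1) (b : ℝ) (x : κ → ℝ) :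
    exp (b * ∑ k ∈ t, w k * x k) ≤ ∑ k ∈ t, w k * exp (b * x k) := by
  have jensen := convexOn_exp.map_sum_le (p := fun k => b * x k) hw0 hw1 fun _ _ => Set.mem_univ _
  simpa only [smul_eq_mul, mul_sum, mul_left_comm b] using jensen

/-- The K-learning value function is optimistic for the expected optimal value:
if `exp(β Kₐ)` upper-bounds the moment generating function of the posterior
optimal Q-value of every action `a`, then `β⁻¹ log Σₐ exp(β Kₐ)` upper-bounds
the posterior expectation of the optimal value. -/
theorem klearning_value_optimistic
    {Ω A : Type*} [Fintype Ω] [Nonempty Ω] [Fintype A] [Nonempty A]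
    (μ : Ω → ℝ) (hμ0 : ∀ ω, 0 ≤ μ ω) (hμ1 : ∑ ω, μ ω = 1)
    (Q : A → Ω → ℝ)
    (β : ℝ) (hβ : 0 < β) (K : A → ℝ)
    (hK : ∀ a, Real.exp (β * K a) ≥ ∑ ω, μ ω * Real.exp (β * Q a ω)) :
    β⁻¹ * Real.log (∑ a, Real.exp (β * K a)) ≥
      ∑ ω, μ ω * Finset.univ.sup' Finset.univ_nonempty (fun a => Q a ω) := by
  have sum_exp_pos : 0 < ∑ a, exp (β * K a) :=
    sum_pos (fun a _ => exp_pos (β * K a)) univ_nonempty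
  rw [ge_iff_le, le_inv_mul_iff₀ hβ, le_log_iff_exp_le sum_exp_pos]
  calc exp (β * ∑ ω, μ ω * univ.sup' univ_nonempty fun a => Q a ω)
    _ ≤ ∑ ω, μ ω * exp (β * univ.sup' univ_nonempty fun a => Q a ω) :=
      exp_mul_sum_mul_le_sum_mul_exp (fun ω _ => hμ0 ω) hμ1 β _
    _ ≤ ∑ a, ∑ ω, μ ω * exp (β * Q a ω) :=
      sum_apply_sup'_le_sum_sum (g := fun ω q => μ ω * exp (β * q)) univ univ_nonempty Q
        fun ω _ _ _ => mul_nonneg (hμ0 ω) (exp_pos _).le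
    _ ≤ ∑ a, exp (β * K a) := sum_le_sum fun a _ => hK a
end
end

section
/- Let Ω be a nonempty finite type with a probability mass function μ, A a nonempty finite type, Q : A → Ω → ℝ, and O : Ω → A any function. Fix a ∈ A with p_O(a) = Σ_{ω : O ω = a} μ(ω) > 0, let β > 0, and suppose K_a ∈ ℝ satisfies exp(β·K_a) ≥ Σ_ω μ(ω)·exp(β·Q a ω). Then β·K_a ≥ log p_O(a) + β·E[Q a | O = a], where E[Q a | O = a] = (Σ_{ω : O ω = a} μ(ω)·Q a ω)/p_O(a). -/
open Finset Real Classical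

noncomputable section

/-!
Discarding the terms outside the event from the exponential moment leaves at least
`p * exp (β * m)`, by Jensen's inequality for `exp`, where `p` is the mass of the event and `m` the
conditional mean of the `Q`-value. Taking logarithms gives the bound.
-/

theorem sum_smul_map_centerMass_le {𝕜 E F ι : Type*} [Field 𝕜] [LinearOrder 𝕜]
    [IsStrictOrderedRing 𝕜] [AddCommGroup E] [Module 𝕜 E] [AddCommGroup F] [PartialOrder F]
    [IsOrderedAddMonoid F] [Module 𝕜 F] [IsStrictOrderedModule 𝕜 F] {C : Set E} {φ : E → F}
    {t : Finset ι} {w : ι → 𝕜} {f : ι → E} (hφ : ConvexOn 𝕜 C φ) (hw : ∀ i ∈ t, 0 ≤ w i)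
    (hpos : 0 < ∑ i ∈ t, w i) (hf : ∀ i ∈ t, f i ∈ C) :
    (∑ i ∈ t, w i) • φ (t.centerMass w f) ≤ ∑ i ∈ t, w i • φ (f i) :=
  calc (∑ i ∈ t, w i) • φ (t.centerMass w f)
      ≤ (∑ i ∈ t, w i) • t.centerMass w (φ ∘ f) :=
        smul_le_smul_of_nonneg_left (hφ.map_centerMass_le hw hpos hf) hpos.le
    _ = ∑ i ∈ t, w i • φ (f i) := smul_inv_smul₀ hpos.ne' _

theorem kvalue_conditional_optimism_general {Ω : Type*} {s t : Finset Ω} {μ Q : Ω → ℝ} {β K : ℝ}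
    (hts : t ⊆ s) (hμ : ∀ ω ∈ s, 0 ≤ μ ω) (hpos : 0 < ∑ ω ∈ t, μ ω)
    (hK : ∑ ω ∈ s, μ ω * exp (β * Q ω) ≤ exp (β * K)) :
    log (∑ ω ∈ t, μ ω) + β * ((∑ ω ∈ t, μ ω * Q ω) / ∑ ω ∈ t, μ ω) ≤ β * K := by
  have mean_eq : t.centerMass μ (fun ω ↦ β * Q ω) =
      β * ((∑ ω ∈ t, μ ω * Q ω) / ∑ ω ∈ t, μ ω) := by
    simpa only [centerMass, smul_eq_mul, inv_mul_eq_div] using centerMass_smul β t Q (w := μ)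
  rw [← exp_le_exp, exp_add, exp_log hpos, ← mean_eq]
  calc (∑ ω ∈ t, μ ω) * exp (t.centerMass μ fun ω ↦ β * Q ω)
      ≤ ∑ ω ∈ t, μ ω * exp (β * Q ω) :=
        sum_smul_map_centerMass_le convexOn_exp (fun ω hω ↦ hμ ω (hts hω)) hpos
          fun _ _ ↦ Set.mem_univ _
    _ ≤ ∑ ω ∈ s, μ ω * exp (β * Q ω) :=
        sum_le_sum_of_subset_of_nonneg hts fun ω hω _ ↦ mul_nonneg (hμ ω hω) (exp_pos _).le
    _ ≤ exp (β * K) := hK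

/-- Key intermediate estimate in the proof of Theorem 1: a
cumulant-generating-function upper bound on a K-value implies it is optimistic
for the conditional expectation of the Q-value given optimality, with an
additive log-probability correction:
`β Kₐ ≥ log pₒ(a) + β E[Q a | O = a]`. -/
theorem kvalue_conditional_optimism
    {Ω A : Type*} [Fintype Ω] [Nonempty Ω] [Fintype A] [Nonempty A]
    (μ : Ω → ℝ) (hμ0 : ∀ ω, 0 ≤ μ ω) (hμ1 : ∑ ω, μ ω = 1)
    (Q : A → Ω → ℝ) (O : Ω → A) (a : A)
    (pOa : ℝ)
    (hpOa : pOa = ∑ ω ∈ Finset.univ.filter (fun ω => O ω = a), μ ω)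
    (hpos : 0 < pOa)
    (β : ℝ) (hβ : 0 < β) (Ka : ℝ)
    (hK : Real.exp (β * Ka) ≥ ∑ ω, μ ω * Real.exp (β * Q a ω)) :
    β * Ka ≥ Real.log pOa +
      β * ((∑ ω ∈ Finset.univ.filter (fun ω => O ω = a), μ ω * Q a ω) / pOa) := by
  subst hpOa
  exact kvalue_conditional_optimism_general (filter_subset _ _) (fun ω _ ↦ hμ0 ω) hpos hK
end
end

section
/- Fix an integer N ≥ 3 and a real ε ∈ (0,1). Define cumulant generating functions G_i : (0,∞) → ℝ for arms i = 1, …, N by G_1(β) = β, G_2(β) = log((exp(2β) + exp(−2β))/2), and G_i(β) = (1−ε)·β for 3 ≤ i ≤ N, and define the K-learning policy π_β(i) = exp(G_i(β)) / Σ_{j=1}^N exp(G_j(β)). Then: (i) β⁻¹·G_2(β) > 0 for every β > 0 (the cumulant generating function of arm 2 is strictly optimistic for its posterior mean 0); and (ii) π_β(2) → 1 as β → ∞ (K-learning converges to pulling arm 2 deterministically). -/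
open Finset Real Classical Filter

noncomputable section

/-!
The unknown arm, whose reward is `±b` with equal probability, has cumulant generating function
`log (cosh (b * β)) ≥ |b| * β - log 2`. It is positive for `β > 0`, and it outgrows the cumulant
generating function `r * β` of every known arm with reward `r < |b|`. A Boltzmann distribution
concentrates on an arm whose exponent exceeds all the others by an amount tending to infinity.
-/

section LogCosh

lemma log_cosh_pos {x : ℝ} (hx : x ≠ 0) : 0 < log (cosh x) :=
  log_pos (one_lt_cosh.mpr hx)

lemma abs_sub_log_two_le_log_cosh (x : ℝ) : |x| - log 2 ≤ log (cosh x) := by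
  have exp_abs_div_two_le : exp |x| / 2 ≤ cosh x := by
    rw [← cosh_abs, cosh_eq]
    linarith [exp_pos (-|x|)]
  calc |x| - log 2 = log (exp |x| / 2) := by
        rw [log_div (exp_ne_zero _) two_ne_zero, log_exp]
    _ ≤ log (cosh x) := log_le_log (by positivity) exp_abs_div_two_le

lemma tendsto_log_cosh_mul_sub_mul_atTop {b r : ℝ} (hr : r < |b|) :
    Tendsto (fun β => log (cosh (b * β)) - r * β) atTop atTop := by
  have linear_atTop : Tendsto (fun β => (|b| - r) * β - log 2) atTop atTop :=
    tendsto_atTop_add_const_right _ _ (tendsto_id.const_mul_atTop (sub_pos.mpr hr))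
  refine tendsto_atTop_mono' atTop ?_ linear_atTop
  filter_upwards [eventually_ge_atTop 0] with β hβ
  have log_cosh_ge := abs_sub_log_two_le_log_cosh (b * β)
  rw [abs_mul, abs_of_nonneg hβ] at log_cosh_ge
  linarith

end LogCosh

section BoltzmannPolicy

variable {ι α : Type*}

/-- The Boltzmann distribution at temperature one on the finite set of arms `s`: it gives arm
`i ∈ s` a probability proportional to `exp (g i)`. The K-learning policy is the case where `g` lists
the values of the cumulant generating functions at a given `β`. Outside `s` the value is not a
probability. -/
def boltzmannPolicy (s : Finset ι) (g : ι → ℝ) (i : ι) : ℝ :=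
  exp (g i) / ∑ j ∈ s, exp (g j)

lemma inv_boltzmannPolicy (s : Finset ι) (g : ι → ℝ) (i : ι) :
    (boltzmannPolicy s g i)⁻¹ = ∑ j ∈ s, exp (g j - g i) := by
  simp only [boltzmannPolicy, inv_div, sum_div, exp_sub]

lemma tendsto_boltzmannPolicy_one {s : Finset ι} {a : ι} (ha : a ∈ s) {g : ι → α → ℝ}
    {l : Filter α} (hg : ∀ j ∈ s, j ≠ a → Tendsto (fun x => g a x - g j x) l atTop) :
    Tendsto (fun x => boltzmannPolicy s (g · x) a) l (nhds 1) := by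
  have tendsto_ratio : ∀ j ∈ s,
      Tendsto (fun x => exp (g j x - g a x)) l (nhds (if j = a then 1 else 0)) := by
    intro j hj
    split_ifs with hja
    · simpa only [hja, sub_self, exp_zero] using tendsto_const_nhds
    · simpa only [Function.comp_def, neg_sub] using
        tendsto_exp_neg_atTop_nhds_zero.comp (hg j hj hja)
  have tendsto_inv : Tendsto (fun x => (boltzmannPolicy s (g · x) a)⁻¹) l (nhds 1) := by
    simpa only [inv_boltzmannPolicy, sum_ite_eq', if_pos ha] using tendsto_finsetSum s tendsto_ratio
  simpa only [inv_inv, inv_one] using tendsto_inv.inv₀ one_ne_zero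

theorem klearning_one_unknown_action_general {s : Finset ι} {a : ι} (ha : a ∈ s) {b : ℝ}
    (hb : b ≠ 0) {G : ι → ℝ → ℝ} (hGa : ∀ β, G a β = log (cosh (b * β)))
    (hG : ∀ j ∈ s, j ≠ a → ∃ r < |b|, ∀ β, G j β = r * β) :
    (∀ β > 0, 0 < β⁻¹ * G a β) ∧
      Tendsto (fun β => boltzmannPolicy s (G · β) a) atTop (nhds 1) := by
  refine ⟨fun β hβ => ?_, tendsto_boltzmannPolicy_one ha fun j hj hja => ?_⟩
  · rw [hGa]
    exact mul_pos (inv_pos.mpr hβ) (log_cosh_pos (mul_ne_zero hb hβ.ne'))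
  · obtain ⟨r, hr, hGj⟩ := hG j hj hja
    simpa only [hGa, hGj] using tendsto_log_cosh_mul_sub_mul_atTop hr

end BoltzmannPolicy

lemma known_arm_slope_lt_two {N : ℕ} {ε : ℝ} (hε : 0 < ε) {G : ℕ → ℝ → ℝ}
    (hG1 : ∀ β, G 1 β = β) (hGi : ∀ i, 3 ≤ i → i ≤ N → ∀ β, G i β = (1 - ε) * β) :
    ∀ j ∈ Icc 1 N, j ≠ 2 → ∃ r < 2, ∀ β, G j β = r * β := by
  intro j hj hj2
  obtain ⟨one_le, le_N⟩ := mem_Icc.mp hj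
  obtain rfl | three_le : j = 1 ∨ 3 ≤ j := by omega
  · exact ⟨1, one_lt_two, fun β => by rw [hG1, one_mul]⟩
  · exact ⟨1 - ε, by linarith, hGi j three_le le_N⟩

/-- K-learning on the 'one unknown action' bandit (Problem 1): (i) the
cumulant generating function of arm 2 is strictly optimistic for its posterior
mean 0, i.e. `β⁻¹ G₂(β) > 0` for every `β > 0`; and (ii) the K-learning
Boltzmann policy concentrates on arm 2 as `β → ∞`, i.e. `π_β(2) → 1`. -/
theorem klearning_one_unknown_action
    (N : ℕ) (hN : 3 ≤ N) (ε : ℝ) (hε : ε ∈ Set.Ioo (0 : ℝ) 1)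
    (G : ℕ → ℝ → ℝ)
    (hG1 : ∀ β, G 1 β = β)
    (hG2 : ∀ β, G 2 β = Real.log ((Real.exp (2 * β) + Real.exp (-(2 * β))) / 2))
    (hGi : ∀ i, 3 ≤ i → i ≤ N → ∀ β, G i β = (1 - ε) * β)
    (piK : ℝ → ℕ → ℝ)
    (hpi : ∀ β i, piK β i =
      Real.exp (G i β) / ∑ j ∈ Finset.Icc 1 N, Real.exp (G j β)) :
    (∀ β > (0 : ℝ), β⁻¹ * G 2 β > 0) ∧
      Filter.Tendsto (fun β => piK β 2) Filter.atTop (nhds 1) := by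
  simp only [hpi]
  exact klearning_one_unknown_action_general (mem_Icc.mpr ⟨one_le_two, by omega⟩) two_ne_zero
    (fun β => by rw [hG2, cosh_eq])
    (by simpa only [abs_two] using known_arm_slope_lt_two hε.1 hG1 hGi)
end
end

section
/- Fix an integer N ≥ 3, a real ε ∈ (0,1), and an integer L ≥ 3. In the 'one unknown action' bandit of Problem 1, every deterministic algorithm alg satisfies max( Regret(M⁺, alg, L), Regret(M⁻, alg, L) ) ≥ 3: no deterministic algorithm has worst-case regret below 3. -/
open Finset Real Classical

noncomputable section

/-- The history produced by running deterministic algorithm `alg` (a map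
from histories of (action, reward) pairs to actions) in the deterministic
bandit with reward function `r` for `n` episodes. -/
def run (alg : List (ℕ × ℝ) → ℕ) (r : ℕ → ℝ) : ℕ → List (ℕ × ℝ)
  | 0 => []
  | n + 1 => run alg r n ++ [(alg (run alg r n), r (alg (run alg r n)))]

/-- The regret of `alg` over `L` episodes in the environment with reward
function `r` and optimal per-episode value `V`. -/
def regret (alg : List (ℕ × ℝ) → ℕ) (r : ℕ → ℝ) (V : ℝ) (L : ℕ) : ℝ :=
  ∑ ℓ ∈ Finset.range L, (V - r (alg (run alg r ℓ)))

/-- Rewards of environment `M⁺` of Problem 1. -/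
def rplus (ε : ℝ) : ℕ → ℝ := fun a => if a = 1 then 1 else if a = 2 then 2 else 1 - ε

/-- Rewards of environment `M⁻` of Problem 1. -/
def rminus (ε : ℝ) : ℕ → ℝ := fun a => if a = 1 then 1 else if a = 2 then -2 else 1 - ε

/-!
Until the algorithm plays the unknown action it sees identical histories in both environments.
If it plays that action at some point in `M⁻`, this single episode costs `1 - (-2) = 3`. If it never
does, it behaves in `M⁺` exactly as in `M⁻`, and each episode there costs at least `1`.
-/

section TwoEnvironments

variable {alg : List (ℕ × ℝ) → ℕ} {r s : ℕ → ℝ} {V W δ : ℝ} {L ℓ n : ℕ}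

theorem run_congr (h : ∀ ℓ < n, r (alg (run alg s ℓ)) = s (alg (run alg s ℓ))) :
    run alg r n = run alg s n := by
  induction n with
  | zero => rfl
  | succ n ih =>
    have history_eq : run alg r n = run alg s n := ih fun ℓ hℓ => h ℓ (hℓ.trans n.lt_succ_self)
    simp only [run, history_eq, h n n.lt_succ_self]

theorem sub_reward_le_regret (hV : ∀ a, r a ≤ V) (hℓ : ℓ < L) :
    V - r (alg (run alg r ℓ)) ≤ regret alg r V L :=
  single_le_sum (f := fun k => V - r (alg (run alg r k))) (fun _ _ => sub_nonneg.2 (hV _))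
    (mem_range.2 hℓ)

theorem mul_le_regret (h : ∀ ℓ < L, δ ≤ V - r (alg (run alg r ℓ))) : L * δ ≤ regret alg r V L := by
  simpa only [regret, card_range, nsmul_eq_mul] using
    card_nsmul_le_sum (range L) _ δ fun ℓ hℓ => h ℓ (mem_range.1 hℓ)

theorem min_le_max_regret_of_eq_of_ne {b : ℕ} (hrs : ∀ a ≠ b, r a = s a) (hW : ∀ a, s a ≤ W)
    (hδ : ∀ a ≠ b, δ ≤ V - r a) (alg : List (ℕ × ℝ) → ℕ) (L : ℕ) :
    min (W - s b) (L * δ) ≤ max (regret alg r V L) (regret alg s W L) := by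
  by_cases plays_b : ∃ ℓ < L, alg (run alg s ℓ) = b
  · obtain ⟨ℓ, hℓ, rfl⟩ := plays_b
    exact (min_le_left _ _).trans (le_max_of_le_right (sub_reward_le_regret hW hℓ))
  · push Not at plays_b
    have run_eq : ∀ ℓ < L, run alg r ℓ = run alg s ℓ := fun ℓ hℓ =>
      run_congr fun k hk => hrs _ (plays_b k (hk.trans hℓ))
    have gap : ∀ ℓ < L, δ ≤ V - r (alg (run alg r ℓ)) := fun ℓ hℓ =>
      hδ _ (run_eq ℓ hℓ ▸ plays_b ℓ hℓ)
    exact (min_le_right _ _).trans (le_max_of_le_left (mul_le_regret gap))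

end TwoEnvironments

section Rewards

variable {ε : ℝ} {a : ℕ}

theorem rplus_eq_rminus (ha : a ≠ 2) : rplus ε a = rminus ε a := by
  simp only [rplus, rminus, if_neg ha]

theorem rminus_two : rminus ε 2 = -2 := by
  norm_num [rminus]

theorem rminus_le_one (hε : 0 ≤ ε) (a : ℕ) : rminus ε a ≤ 1 := by
  unfold rminus
  split_ifs <;> linarith

theorem rplus_le_one (hε : 0 ≤ ε) (ha : a ≠ 2) : rplus ε a ≤ 1 :=
  (rplus_eq_rminus ha).trans_le (rminus_le_one hε a)

end Rewards

theorem minimax_regret_lower_bound_general {ε : ℝ} (hε : 0 ≤ ε) (alg : List (ℕ × ℝ) → ℕ) (L : ℕ) :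
    min 3 (L : ℝ) ≤ max (regret alg (rplus ε) 2 L) (regret alg (rminus ε) 1 L) := by
  have gap_plus : ∀ a ≠ 2, 1 ≤ 2 - rplus ε a := fun a ha => by linarith [rplus_le_one hε ha]
  have cost_minus : 1 - rminus ε 2 = 3 := by rw [rminus_two]; norm_num
  simpa only [cost_minus, mul_one] using
    min_le_max_regret_of_eq_of_ne (fun _ => rplus_eq_rminus) (rminus_le_one hε) gap_plus alg L

/-- In Problem 1, for `L ≥ 3`, no deterministic algorithm taking actions in
`{1, …, N}` has worst-case regret over `{M⁺, M⁻}` below 3. -/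
theorem minimax_regret_lower_bound
    (N : ℕ) (hN : 3 ≤ N) (ε : ℝ) (hε : ε ∈ Set.Ioo (0 : ℝ) 1)
    (L : ℕ) (hL : 3 ≤ L)
    (alg : List (ℕ × ℝ) → ℕ) (halg : ∀ h, 1 ≤ alg h ∧ alg h ≤ N) :
    3 ≤ max (regret alg (rplus ε) 2 L) (regret alg (rminus ε) 1 L) := by
  have three_le : (3 : ℝ) ≤ min 3 (L : ℝ) := le_min le_rfl (by exact_mod_cast hL)
  exact three_le.trans (minimax_regret_lower_bound_general hε.1.le alg L)
end
end

section
/- Let μ be the infinite product over ℕ of the Bernoulli(1/2) measure on Bool (the law of an i.i.d. sequence of fair coin flips), a probability measure on ℕ → Bool, and define the hitting time T(ω) = sInf { n : ω n = true }. For every integer L ≥ 1: (i) ∫ min(T, L) dμ = 1 − 2^{−L}; (ii) μ{ω : T(ω) < L} = 1 − 2^{−L}; and consequently (iii) (1/2)·∫ min(T, L) dμ + (1/2)·3·μ{T < L} = 2·(1 − 2^{−L}) ≤ 2. (This computes the Bayesian regret of Thompson sampling on Problem 1 with uniform prior: in M⁺ each episode before the first sample of M⁺ incurs regret 1, and in M⁻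 the single play of arm 2, occurring iff M⁺ is sampled within L episodes, incurs regret 3; so the Bayesian regret after L episodes is 2(1 − 2^{−L}).) -/
open Finset Real Classical MeasureTheory

noncomputable section

/-!
Almost surely some flip is `true`, and then `k ≤ T` means exactly that the first `k` flips are
`false`. So if these `k` flips are all `false` with probability `q ^ k`, then `T` is geometric:
`P(k ≤ T) = q ^ k`. Hence `P(T < L) = 1 - q ^ L` and, summing tails,
`E[min(T, L)] = ∑_{k < L} P(k < T) = q + ⋯ + q ^ L`.
For prior weights `1 - q` on `M⁺` and `q` on `M⁻` the regrets `q (1 - q ^ L)` and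
`3 q (1 - q ^ L)` add up to `4 q (1 - q ^ L)`; the uniform prior is `q = 1 / 2`.
-/

lemma le_sInf_iff_forall_lt_notMem {s : Set ℕ} (hs : s.Nonempty) (k : ℕ) :
    k ≤ sInf s ↔ ∀ i < k, i ∉ s := by
  rw [le_csInf_iff (OrderBot.bddBelow s) hs]
  exact ⟨fun h i hik his => (h i his).not_gt hik, fun h i his => not_lt.1 fun hik => h i hik his⟩

lemma min_natCast_eq_sum_ite {R : Type*} [Semiring R] [LinearOrder R] [IsStrictOrderedRing R]
    (t L : ℕ) : (min t L : R) = ∑ k ∈ range L, if k < t then 1 else 0 := by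
  have filter_lt : {k ∈ range L | k < t} = range (min t L) := by
    ext k
    simp only [mem_filter, mem_range, lt_min_iff, and_comm]
  rw [sum_boole, filter_lt, card_range, Nat.cast_min]

section Tail

variable {Ω : Type*} [MeasurableSpace Ω] {μ : Measure Ω} {T : Ω → ℕ} {q : ℝ}

lemma integral_min_natCast_eq_sum_measureReal_lt [IsFiniteMeasure μ] (hT : Measurable T) (L : ℕ) :
    ∫ ω, (min (T ω) L : ℝ) ∂μ = ∑ k ∈ range L, μ.real {ω | k < T ω} := by
  have measurableSet_tail (k : ℕ) : MeasurableSet {ω | k < T ω} :=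
    measurableSet_lt measurable_const hT
  calc ∫ ω, (min (T ω) L : ℝ) ∂μ
      = ∫ ω, ∑ k ∈ range L, {ω | k < T ω}.indicator 1 ω ∂μ := by
        simp only [min_natCast_eq_sum_ite, Set.indicator_apply, Set.mem_ofPred_eq, Pi.one_apply]
    _ = ∑ k ∈ range L, ∫ ω, {ω | k < T ω}.indicator 1 ω ∂μ :=
        integral_finsetSum _ fun k _ => (integrable_const 1).indicator (measurableSet_tail k)
    _ = ∑ k ∈ range L, μ.real {ω | k < T ω} :=
        sum_congr rfl fun k _ => integral_indicator_one (measurableSet_tail k)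

lemma integral_min_natCast_of_geometric_tail [IsFiniteMeasure μ] (hT : Measurable T)
    (htail : ∀ k, μ.real {ω | k ≤ T ω} = q ^ k) (hq : q ≠ 1) (L : ℕ) :
    ∫ ω, (min (T ω) L : ℝ) ∂μ = q / (1 - q) * (1 - q ^ L) := by
  calc ∫ ω, (min (T ω) L : ℝ) ∂μ
      = ∑ k ∈ range L, μ.real {ω | k + 1 ≤ T ω} := integral_min_natCast_eq_sum_measureReal_lt hT L
    _ = q * ∑ k ∈ range L, q ^ k := by simp only [htail, pow_succ', mul_sum]
    _ = q / (1 - q) * (1 - q ^ L) := by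
        rw [geom_sum_eq hq, ← neg_div_neg_eq, neg_sub, neg_sub, mul_div_left_comm, mul_comm]

lemma measureReal_lt_of_geometric_tail [IsProbabilityMeasure μ] (hT : Measurable T)
    (htail : ∀ k, μ.real {ω | k ≤ T ω} = q ^ k) (L : ℕ) :
    μ.real {ω | T ω < L} = 1 - q ^ L := by
  have compl_tail : {ω | T ω < L} = {ω | L ≤ T ω}ᶜ := by
    ext ω
    simp only [Set.mem_compl_iff, Set.mem_ofPred_eq, not_le]
  rw [compl_tail, probReal_compl_eq_one_sub (measurableSet_le measurable_const hT), htail]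

end Tail

/-- The index of the first of the events `E 0, E 1, …` that occurs at `ω`: the hitting time `T`
when `E n` is the event that flip `n` is `true`. It has the junk value `0` where no event occurs. -/
def firstOccurrence {Ω : Type*} (E : ℕ → Set Ω) (ω : Ω) : ℕ :=
  sInf {n | ω ∈ E n}

section FirstOccurrence

variable {Ω : Type*} [MeasurableSpace Ω] {μ : Measure Ω} {E : ℕ → Set Ω} {q : ℝ}

lemma measurable_firstOccurrence (hE : ∀ n, MeasurableSet (E n)) :
    Measurable (firstOccurrence E) := by
  refine measurable_of_Ioi fun k => ?_
  have preimage_Ioi : firstOccurrence E ⁻¹' Set.Ioi k =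
      {ω | (∃ n, ω ∈ E n) ∧ ∀ i < k + 1, ω ∉ E i} := by
    ext ω
    rcases Set.eq_empty_or_nonempty {n | ω ∈ E n} with hempty | hnonempty
    · have not_exists_mem : ¬∃ n, ω ∈ E n := fun ⟨n, hn⟩ => hempty.subset hn
      simp [firstOccurrence, hempty, not_exists_mem]
    · have exists_mem : ∃ n, ω ∈ E n := hnonempty
      simpa [firstOccurrence, exists_mem] using le_sInf_iff_forall_lt_notMem hnonempty (k + 1)
  rw [preimage_Ioi]
  measurability

lemma ae_exists_mem_of_tendsto_measure_forall_lt_notMem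
    (h : Filter.Tendsto (fun k => μ {ω | ∀ i < k, ω ∉ E i}) Filter.atTop (nhds 0)) :
    ∀ᵐ ω ∂μ, ∃ n, ω ∈ E n := by
  refine ae_iff.2 (nonpos_iff_eq_zero.1 (ge_of_tendsto' h fun _ => measure_mono ?_))
  exact fun ω hω i _ hi => hω ⟨i, hi⟩

lemma measure_le_firstOccurrence (hocc : ∀ᵐ ω ∂μ, ∃ n, ω ∈ E n) (k : ℕ) :
    μ {ω | k ≤ firstOccurrence E ω} = μ {ω | ∀ i < k, ω ∉ E i} := by
  refine measure_congr (Filter.eventuallyEq_set.2 ?_)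
  filter_upwards [hocc] with ω hω
  exact le_sInf_iff_forall_lt_notMem hω k

lemma measureReal_le_firstOccurrence_of_geometric [IsFiniteMeasure μ]
    (hgeom : ∀ k, μ.real {ω | ∀ i < k, ω ∉ E i} = q ^ k) (hq : q < 1) (k : ℕ) :
    μ.real {ω | k ≤ firstOccurrence E ω} = q ^ k := by
  have q_nonneg : 0 ≤ q := by
    rw [← pow_one q, ← hgeom 1]
    exact measureReal_nonneg
  have tendsto_measure :
      Filter.Tendsto (fun k => μ {ω | ∀ i < k, ω ∉ E i}) Filter.atTop (nhds 0) := by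
    rw [← ENNReal.tendsto_toReal_zero_iff]
    exact (tendsto_pow_atTop_nhds_zero_of_lt_one q_nonneg hq).congr fun k => (hgeom k).symm
  have occurs := ae_exists_mem_of_tendsto_measure_forall_lt_notMem tendsto_measure
  rw [measureReal_def, measure_le_firstOccurrence occurs, ← measureReal_def, hgeom]

theorem thompson_sampling_bayes_regret_problem1_general [IsProbabilityMeasure μ]
    (hE : ∀ n, MeasurableSet (E n)) (hq : q < 1)
    (hgeom : ∀ k, μ.real {ω | ∀ i < k, ω ∉ E i} = q ^ k) (L : ℕ) :
    (∫ ω, (min (firstOccurrence E ω) L : ℝ) ∂μ = q / (1 - q) * (1 - q ^ L)) ∧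
      (μ.real {ω | firstOccurrence E ω < L} = 1 - q ^ L) ∧
      ((1 - q) * (∫ ω, (min (firstOccurrence E ω) L : ℝ) ∂μ)
          + q * 3 * μ.real {ω | firstOccurrence E ω < L}
        = 4 * q * (1 - q ^ L) ∧
        4 * q * (1 - q ^ L) ≤ 4 * q) := by
  have measurable_T := measurable_firstOccurrence hE
  have tail := measureReal_le_firstOccurrence_of_geometric hgeom hq
  have integral_min := integral_min_natCast_of_geometric_tail measurable_T tail hq.ne L
  have prob_lt := measureReal_lt_of_geometric_tail measurable_T tail L
  have q_pow_nonneg : 0 ≤ q ^ (L + 1) := hgeom (L + 1) ▸ measureReal_nonneg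
  refine ⟨integral_min, prob_lt, ?_, ?_⟩
  · have one_sub_q_ne_zero : 1 - q ≠ 0 := sub_ne_zero.2 hq.ne'
    rw [integral_min, prob_lt]
    field_simp
    ring
  · linear_combination 4 * q_pow_nonneg

end FirstOccurrence

/-- Bayesian regret of Thompson sampling on Problem 1 with uniform prior.
`μ` is the law of an i.i.d. sequence of fair coin flips — the infinite
product over `ℕ` of the Bernoulli(1/2) measure on `Bool`, characterized by
its values on cylinder sets — and `T` is the hitting time of `true`.  Then
(i) `∫ min(T, L) dμ = 1 − 2⁻ᴸ`; (ii) `μ{T < L} = 1 − 2⁻ᴸ`; and consequently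
(iii) `(1/2)·∫ min(T, L) dμ + (1/2)·3·μ{T < L} = 2(1 − 2⁻ᴸ) ≤ 2`. -/
theorem thompson_sampling_bayes_regret_problem1
    (μ : Measure (ℕ → Bool)) [IsProbabilityMeasure μ]
    (hiid : ∀ (n : ℕ) (b : ℕ → Bool),
      μ {ω | ∀ i < n, ω i = b i} = (1 / 2 : ENNReal) ^ n)
    (T : (ℕ → Bool) → ℕ)
    (hT : ∀ ω, T ω = sInf {n | ω n = true})
    (L : ℕ) (hL : 1 ≤ L) :
    (∫ ω, (min (T ω) L : ℝ) ∂μ = 1 - (1 / 2 : ℝ) ^ L) ∧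
      ((μ {ω | T ω < L}).toReal = 1 - (1 / 2 : ℝ) ^ L) ∧
      ((1 / 2) * (∫ ω, (min (T ω) L : ℝ) ∂μ)
          + (1 / 2) * 3 * (μ {ω | T ω < L}).toReal
        = 2 * (1 - (1 / 2 : ℝ) ^ L) ∧
        2 * (1 - (1 / 2 : ℝ) ^ L) ≤ 2) := by
  obtain rfl : T = firstOccurrence fun n => {ω | ω n = true} := funext hT
  have measurableSet_true (n : ℕ) : MeasurableSet {ω : ℕ → Bool | ω n = true} :=
    measurableSet_eq_fun (measurable_pi_apply n) measurable_const
  have all_false (k : ℕ) : μ.real {ω | ∀ i < k, ω ∉ {ω | ω i = true}} = (1 / 2) ^ k := by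
    simpa [measureReal_def] using congrArg ENNReal.toReal (hiid k fun _ => false)
  convert thompson_sampling_bayes_regret_problem1_general measurableSet_true one_half_lt_one
    all_false L using 3 <;> norm_num [measureReal_def]
end
end
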